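/- Upward-crossing segment bound: suppose 0 ≤ τ_l < τ_r ≤ T, Δ(τ_l) = −β, Δ(τ_r) = 0, and −β < Δ(t) < 0 for all t with τ_l < t < τ_r. Then Σ_{t=τ_l+1}^{τ_r−1} ( g_t(0) − g_t(1) ) ≤ β. -/

import Mathlib

/-- The cumulative cost difference `Δ(t)`, with `Δ(0) = −β` and
`Δ(t) = min{0, max{−β, Δ(t−1) + (g_t(0) − g_t(1))}}`. -/
noncomputable def Δfun (β : ℝ) (g0 g1 : ℕ → ℝ) : ℕ → ℝ
  | 0 => -β
  | t + 1 => min 0 (max (-β) (Δfun β g0 g1 t + (g0 (t + 1) - g1 (t + 1))))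

/-!
Wherever `Δ` is negative the truncation at `0` is inactive, and the truncation at `-β` only
increases the value, so the cost difference `g_t(0) − g_t(1)` is at most the increment of `Δ`.
On a segment where `Δ` stays negative these increments telescope to a difference of two values
of `Δ`, and `Δ` takes its values in `[-β, 0]`.
-/

namespace Δfun

variable {β : ℝ} {g0 g1 : ℕ → ℝ}

theorem mem_Icc (hβ : 0 ≤ β) (t : ℕ) : Δfun β g0 g1 t ∈ Set.Icc (-β) 0 := by
  have hβ' : -β ≤ 0 := neg_nonpos.mpr hβ
  cases t with
  | zero => exact ⟨le_rfl, hβ'⟩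
  | succ t => exact ⟨le_min hβ' (le_max_left _ _), min_le_left _ _⟩

theorem cost_sub_le_sub_of_neg {t : ℕ} (hneg : Δfun β g0 g1 (t + 1) < 0) :
    g0 (t + 1) - g1 (t + 1) ≤ Δfun β g0 g1 (t + 1) - Δfun β g0 g1 t := by
  have hlower : max (-β) (Δfun β g0 g1 t + (g0 (t + 1) - g1 (t + 1))) ≤ Δfun β g0 g1 (t + 1) :=
    (min_le_iff.mp le_rfl).resolve_left hneg.not_ge
  exact le_sub_iff_add_le'.mpr ((le_max_right _ _).trans hlower)

theorem sum_Ioc_cost_sub_le_sub {a b : ℕ} (hab : a ≤ b)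
    (hneg : ∀ t ∈ Finset.Ioc a b, Δfun β g0 g1 t < 0) :
    ∑ t ∈ Finset.Ioc a b, (g0 t - g1 t) ≤ Δfun β g0 g1 b - Δfun β g0 g1 a := by
  induction b, hab using Nat.le_induction with
  | base => simp
  | succ b hab ih =>
    have hinit : ∑ t ∈ Finset.Ioc a b, (g0 t - g1 t) ≤ Δfun β g0 g1 b - Δfun β g0 g1 a :=
      ih fun t ht => hneg t (Finset.Ioc_subset_Ioc_right b.le_succ ht)
    have hlast : g0 (b + 1) - g1 (b + 1) ≤ Δfun β g0 g1 (b + 1) - Δfun β g0 g1 b :=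
      cost_sub_le_sub_of_neg (hneg _ (Finset.right_mem_Ioc.mpr (Nat.lt_succ_of_le hab)))
    rw [Finset.sum_Ioc_succ_top hab]
    linarith

end Δfun

theorem stmt16_general {β : ℝ} (hβ : 0 ≤ β) {g0 g1 : ℕ → ℝ} {a b : ℕ}
    (hneg : ∀ t ∈ Finset.Ioo a b, Δfun β g0 g1 t < 0) :
    ∑ t ∈ Finset.Ioo a b, (g0 t - g1 t) ≤ β := by
  obtain hba | hab := le_or_gt b a
  · simpa only [Finset.Ioo_eq_empty_of_le hba, Finset.sum_empty] using hβ
  obtain ⟨c, rfl⟩ := Nat.exists_eq_add_one_of_ne_zero hab.ne_bot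
  rw [Finset.Ioo_add_one_right_eq_Ioc] at hneg ⊢
  calc ∑ t ∈ Finset.Ioc a c, (g0 t - g1 t)
      ≤ Δfun β g0 g1 c - Δfun β g0 g1 a :=
        Δfun.sum_Ioc_cost_sub_le_sub (Nat.le_of_lt_succ hab) hneg
    _ ≤ 0 - -β := sub_le_sub (Δfun.mem_Icc hβ c).2 (Δfun.mem_Icc hβ a).1
    _ = β := by rw [zero_sub, neg_neg]

/-- upward-crossing segment bound: if `Δ(τ_l) = −β`,
`Δ(τ_r) = 0` and `−β < Δ(t) < 0` strictly inside the segment, then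
`Σ_{t=τ_l+1}^{τ_r−1} (g_t(0) − g_t(1)) ≤ β`. -/
theorem stmt16 (T : ℕ) (β : ℝ) (hβ : 0 ≤ β) (g0 g1 : ℕ → ℝ)
    (hg0 : ∀ t, 1 ≤ t → t ≤ T → 0 ≤ g0 t) (hg1 : ∀ t, 1 ≤ t → t ≤ T → 0 ≤ g1 t)
    (τl τr : ℕ) (hlr : τl < τr) (hrT : τr ≤ T)
    (hl : Δfun β g0 g1 τl = -β) (hr : Δfun β g0 g1 τr = 0)
    (hmid : ∀ t, τl < t → t < τr → -β < Δfun β g0 g1 t ∧ Δfun β g0 g1 t < 0) :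
    ∑ t ∈ Finset.Ioo τl τr, (g0 t - g1 t) ≤ β :=
  stmt16_general hβ fun t ht =>
    (hmid t (Finset.mem_Ioo.mp ht).1 (Finset.mem_Ioo.mp ht).2).2
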